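/- For every integer n ≥ 1, every t > 0, r ∈ [0, π/2) and η ∈ (0, π), the subelliptic heat kernel of the quaternionic Hopf fibration admits the integral representation p_t(r, η) = (e^{−t}/√(πt))·∫_0^∞ (sinh y·sin(ηy/(2t))/sin η)·e^{−(y²−η²)/(4t)}·q_t(cos r·cosh y) dy. -/

import Mathlib

open Real MeasureTheory Filter Topology Set

noncomputable section

/-- The defining formula of the Jacobi polynomial `P_k^{(α,β)}` on `(-1,1)`. -/
def jacobiFormula (k α β : ℕ) (x : ℝ) : ℝ :=
  ((-1 : ℝ) ^ k / (2 ^ k * Nat.factorial k)) * (1 - x) ^ (-(α : ℤ)) * (1 + x) ^ (-(β : ℤ)) *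
    iteratedDeriv k (fun y => (1 - y) ^ (α + k) * (1 + y) ^ (β + k)) x

/-- `J k α β` is the Jacobi polynomial `P_k^{(α,β)}`: a polynomial function satisfying the
defining formula on `(-1,1)`. -/
def IsJacobi (J : ℕ → ℕ → ℕ → ℝ → ℝ) : Prop :=
  ∀ k α β : ℕ, (∃ p : Polynomial ℝ, ∀ x : ℝ, J k α β x = p.eval x) ∧
    ∀ x ∈ Set.Ioo (-1 : ℝ) 1, J k α β x = jacobiFormula k α β x

/-- The vertical factor `sin((m+1)η)/sin η`, extended by its limit `m+1` at `η = 0`. -/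
def vertFactor (m : ℕ) (η : ℝ) : ℝ :=
  if η = 0 then (m + 1 : ℝ) else Real.sin ((m + 1) * η) / Real.sin η

/-- The general term of the double series defining the subelliptic heat kernel of the
quaternionic Hopf fibration on `S^{4n+3}`. -/
def pTerm (n : ℕ) (J : ℕ → ℕ → ℕ → ℝ → ℝ) (t r η : ℝ) (mk : ℕ × ℕ) : ℝ :=
  (Real.Gamma (2 * n) / (2 * Real.pi ^ (2 * n + 2))) *
    (2 * (mk.2 : ℝ) + mk.1 + 2 * n + 1) * ((mk.1 : ℝ) + 1) *
    (Nat.choose (mk.2 + mk.1 + 2 * n) (2 * n - 1) : ℝ) *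
    Real.exp (-(4 * ((mk.2 : ℝ) * (mk.2 + 2 * n + mk.1 + 1) + n * mk.1)) * t) *
    vertFactor mk.1 η * Real.cos r ^ mk.1 * J mk.2 (2 * n - 1) (mk.1 + 1) (Real.cos (2 * r))

/-- The subelliptic heat kernel of the quaternionic Hopf fibration on `S^{4n+3}`. -/
def pKernel (n : ℕ) (J : ℕ → ℕ → ℕ → ℝ → ℝ) (t r η : ℝ) : ℝ :=
  ∑' mk : ℕ × ℕ, pTerm n J t r η mk

/-- The defining formula of the Gegenbauer polynomial `C_m^{2n+1}` on `(-1,1)`. -/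
def gegenbauerFormula (n m : ℕ) (x : ℝ) : ℝ :=
  ((-1 : ℝ) ^ m / 2 ^ m) *
    (Real.Gamma ((m : ℝ) + 4 * n + 2) * Real.Gamma (2 * (n : ℝ) + 3 / 2) /
      (Real.Gamma (4 * (n : ℝ) + 2) * Real.Gamma ((m : ℝ) + 1) *
        Real.Gamma (2 * (n : ℝ) + m + 3 / 2))) *
    (1 - x ^ 2) ^ (-(2 * (n : ℝ) + 1 / 2)) *
    iteratedDeriv m (fun y => (1 - y ^ 2) ^ (2 * (n : ℝ) + m + 1 / 2)) x

/-- `C m` is the Gegenbauer polynomial `C_m^{2n+1}`. -/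
def IsGegenbauer (n : ℕ) (C : ℕ → ℝ → ℝ) : Prop :=
  ∀ m : ℕ, (∃ p : Polynomial ℝ, ∀ x : ℝ, C m x = p.eval x) ∧
    ∀ x ∈ Set.Ioo (-1 : ℝ) 1, C m x = gegenbauerFormula n m x

/-- The Riemannian heat kernel of `S^{4n+3}`. -/
def qKernel (n : ℕ) (C : ℕ → ℝ → ℝ) (t x : ℝ) : ℝ :=
  (Real.Gamma (2 * n + 1) / (2 * Real.pi ^ (2 * n + 2))) *
    ∑' m : ℕ, ((m : ℝ) + 2 * n + 1) * Real.exp (-((m : ℝ) * (m + 4 * n + 2)) * t) * C m x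

/-- The general term of the double series defining the subelliptic heat kernel on `CP^{2n+1}`. -/
def hTerm (n : ℕ) (J : ℕ → ℕ → ℕ → ℝ → ℝ) (t r φ : ℝ) (mk : ℕ × ℕ) : ℝ :=
  (Real.Gamma (2 * n) / (4 * Real.pi ^ (2 * n + 2))) *
    (2 * (mk.2 : ℝ) + 2 * mk.1 + 2 * n + 1) * (2 * (mk.1 : ℝ) + 1) *
    (Nat.choose (mk.2 + 2 * mk.1 + 2 * n) (2 * n - 1) : ℝ) *
    Real.exp (-(4 * (mk.2 : ℝ) * (mk.2 + 2 * n + 2 * mk.1 + 1) + 8 * n * mk.1) * t) *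
    Real.cos r ^ (2 * mk.1) * J mk.1 0 0 (Real.cos (2 * φ)) *
    J mk.2 (2 * n - 1) (2 * mk.1 + 1) (Real.cos (2 * r))

/-- The subelliptic heat kernel of the fibration `CP^1 → CP^{2n+1} → HP^n`. -/
def hKernel (n : ℕ) (J : ℕ → ℕ → ℕ → ℝ → ℝ) (t r φ : ℝ) : ℝ :=
  ∑' mk : ℕ × ℕ, hTerm n J t r φ mk

end

/-!
Write `x = cos r`. Expanding a Gegenbauer polynomial in powers of its argument and then
`(2 cosh y)^p sinh y` in the functions `sinh ((m + 1) y)` (an expansion in Chebyshev polynomials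
`U_m`) shows that `2n sinh y C_l^{2n+1}(x cosh y)` is a sum over `m + 2k = l` of
`sinh ((m + 1) y)` times exactly the Jacobi factor of the `(m, k)` term of the subelliptic kernel.
The Gaussian integral of `sinh ((m + 1) y) sin (η y / 2t)` over the half-line contributes
`exp (t (m + 1)²) sin ((m + 1) η)`, and completing the square,
`(m + 2k) (m + 2k + 4n + 2) - (m + 1)² + 1 = 4 (k (k + 2n + m + 1) + nm)`, turns the Riemannian
eigenvalue into the subelliptic one. Integrating term by term is legitimate because the `(m, k)`
coefficient is at most `(m + 2k + 2n + 1)^(2n + k)`, while the subelliptic eigenvalue grows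
quadratically in `k`.
-/

open Polynomial (X derivative)
open Polynomial.Chebyshev (U)
open Finset.HasAntidiagonal (antidiagonal)
open scoped Nat

theorem polynomial_eq_of_eqOn_Ioo {p q : Polynomial ℝ} {a b : ℝ} (hab : a < b)
    (h : ∀ x ∈ Ioo a b, p.eval x = q.eval x) : p = q :=
  Polynomial.eq_of_infinite_eval_eq p q ((Ioo_infinite hab).mono h)

section Jacobi

variable (k α β : ℕ)

/-- The Jacobi polynomial `P_k^{(α,β)}`, in the form that the Leibniz rule gives when applied to
the Rodrigues formula. -/
noncomputable def jacobiPoly : Polynomial ℝ :=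
  ∑ ij ∈ antidiagonal k, Polynomial.C ((k + α).choose ij.1 * (k + β).choose ij.2 : ℝ) *
    (Polynomial.C (1 / 2) * (X + 1)) ^ ij.1 * (Polynomial.C (1 / 2) * (X - 1)) ^ ij.2

theorem eval_jacobiPoly (x : ℝ) : (jacobiPoly k α β).eval x =
    ∑ ij ∈ antidiagonal k, (k + α).choose ij.1 * (k + β).choose ij.2 *
      ((x + 1) / 2) ^ ij.1 * ((x - 1) / 2) ^ ij.2 := by
  simp [jacobiPoly, Polynomial.eval_finsetSum, div_eq_inv_mul]

theorem iteratedDeriv_one_sub_pow_mul_one_add_pow (a b : ℕ) (x : ℝ) :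
    iteratedDeriv k (fun y : ℝ => (1 - y) ^ a * (1 + y) ^ b) x =
      ∑ ij ∈ antidiagonal k, (k.choose ij.1 : ℝ) *
        ((-1) ^ ij.1 * (a.descFactorial ij.1 * (1 - x) ^ (a - ij.1))) *
        (b.descFactorial ij.2 * (1 + x) ^ (b - ij.2)) := by
  have leibniz := iteratedDeriv_mul (n := k) (x := x) (f := fun y : ℝ => (1 - y) ^ a)
    (g := fun y : ℝ => (1 + y) ^ b) (by fun_prop) (by fun_prop)
  rw [Finset.Nat.sum_antidiagonal_eq_sum_range_succ fun i j => (k.choose i : ℝ) *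
      ((-1) ^ i * (a.descFactorial i * (1 - x) ^ (a - i))) *
      (b.descFactorial j * (1 + x) ^ (b - j))]
  refine leibniz.trans (Finset.sum_congr rfl fun i _ => ?_)
  rw [iteratedDeriv_comp_const_sub i (· ^ a), iteratedDeriv_comp_const_add (k - i) (· ^ b)]
  simp only [iteratedDeriv_pow, smul_eq_mul]

theorem jacobiFormula_eq_eval {x : ℝ} (hx : x ∈ Ioo (-1 : ℝ) 1) :
    jacobiFormula k α β x = (jacobiPoly k α β).eval x := by
  have hsub : 1 - x ≠ 0 := by linarith [hx.2]
  have hadd : 1 + x ≠ 0 := by linarith [hx.1]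
  rw [jacobiFormula, iteratedDeriv_one_sub_pow_mul_one_add_pow, eval_jacobiPoly, Finset.mul_sum]
  refine Finset.sum_congr rfl fun ⟨i, j⟩ hij => ?_
  obtain rfl := Finset.HasAntidiagonal.mem_antidiagonal.mp hij
  have choose_eq : ((i + j).choose i : ℝ) = (i + j)! / (i ! * j !) := Nat.cast_add_choose ℝ
  have sub_one_eq : x - 1 = -1 * (1 - x) := by ring
  rw [show α + (i + j) - i = α + j by omega, show β + (i + j) - j = β + i by omega,
    Nat.descFactorial_eq_factorial_mul_choose, Nat.descFactorial_eq_factorial_mul_choose,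
    choose_eq, sub_one_eq, add_comm x 1, zpow_neg, zpow_neg, zpow_natCast, zpow_natCast,
    add_comm α, add_comm β, pow_add (1 - x), pow_add (1 + x), div_pow, div_pow, mul_pow (-1)]
  have sign : (-1 : ℝ) ^ (i + j) * (-1) ^ i = (-1) ^ j := by
    rw [pow_add, mul_right_comm, ← mul_pow]; simp
  push_cast
  field_simp
  rw [← sign]
  ring

theorem IsJacobi.eq_eval {J : ℕ → ℕ → ℕ → ℝ → ℝ} (hJ : IsJacobi J) (x : ℝ) :
    J k α β x = (jacobiPoly k α β).eval x := by
  obtain ⟨⟨p, hp⟩, hformula⟩ := hJ k α β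
  have : p = jacobiPoly k α β := polynomial_eq_of_eqOn_Ioo (neg_one_lt_zero.trans one_pos)
    fun y hy => by rw [← hp, hformula y hy, jacobiFormula_eq_eval k α β hy]
  rw [hp, this]

theorem abs_eval_jacobiPoly_le {u : ℝ} (hu : u ∈ Icc (0 : ℝ) 1) :
    |(jacobiPoly k α β).eval (2 * u - 1)| ≤ (2 * k + α + β).choose k := by
  have hu' : |u - 1| ≤ 1 := abs_le.mpr ⟨by linarith [hu.1], by linarith [hu.2]⟩
  rw [eval_jacobiPoly, show 2 * k + α + β = (k + α) + (k + β) by ring, Nat.add_choose_eq]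
  push_cast
  refine (Finset.abs_sum_le_sum_abs _ _).trans (Finset.sum_le_sum fun ⟨i, j⟩ _ => ?_)
  rw [show (2 * u - 1 + 1) / 2 = u by ring, show (2 * u - 1 - 1) / 2 = u - 1 by ring,
    mul_assoc, abs_mul, abs_of_nonneg (by positivity), abs_mul, abs_pow, abs_pow,
    abs_of_nonneg hu.1]
  exact mul_le_of_le_one_right (by positivity)
    (mul_le_one₀ (pow_le_one₀ hu.1 hu.2) (by positivity) (pow_le_one₀ (abs_nonneg _) hu'))

end Jacobi

theorem sum_antidiagonal_antidiagonal {M : Type*} [AddCommMonoid M] (f : ℕ → ℕ → ℕ → M) (k : ℕ) :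
    ∑ ij ∈ antidiagonal k, ∑ ab ∈ antidiagonal ij.2, f ij.1 ab.1 ab.2 =
      ∑ sb ∈ antidiagonal k, ∑ ia ∈ antidiagonal sb.1, f ia.1 ia.2 sb.2 := by
  rw [Finset.sum_sigma', Finset.sum_sigma']
  refine Finset.sum_nbij' (fun p => ⟨(p.1.1 + p.2.1, p.2.2), (p.1.1, p.2.1)⟩)
    (fun p => ⟨(p.2.1, p.2.2 + p.1.2), (p.2.2, p.1.2)⟩) ?_ ?_ ?_ ?_ ?_ <;>
  simp only [Finset.mem_sigma, Finset.HasAntidiagonal.mem_antidiagonal] <;>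
  rintro ⟨⟨a, b⟩, c, d⟩ ⟨h, h'⟩ <;> grind

theorem eval_jacobiPoly_two_mul_sub_one (k α β : ℕ) (u : ℝ) :
    (jacobiPoly k α β).eval (2 * u - 1) = ∑ ij ∈ antidiagonal k,
      (-1) ^ ij.2 * (k + β).choose ij.2 * (k + α + β + ij.1).choose ij.1 * u ^ ij.1 := by
  have expand : (jacobiPoly k α β).eval (2 * u - 1) =
      ∑ ij ∈ antidiagonal k, ∑ ab ∈ antidiagonal ij.2, (-1) ^ ab.2 *
        ((k + α).choose ij.1 * ((k + β).choose (ab.1 + ab.2) * (ab.1 + ab.2).choose ab.2) : ℕ) *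
        u ^ (ij.1 + ab.1) := by
    rw [eval_jacobiPoly]
    refine Finset.sum_congr rfl fun ⟨i, j⟩ _ => ?_
    rw [show (2 * u - 1 + 1) / 2 = u by ring, show (2 * u - 1 - 1) / 2 = u + -1 by ring,
      (Commute.all u (-1)).add_pow', Finset.mul_sum]
    refine Finset.sum_congr rfl fun ⟨a, b⟩ hab => ?_
    obtain rfl := Finset.HasAntidiagonal.mem_antidiagonal.mp hab
    rw [nsmul_eq_mul, Nat.choose_symm_add]
    push_cast
    ring
  have vandermonde (s b : ℕ) (hk : s + b = k) : ∑ ia ∈ antidiagonal s,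
      (k + α).choose ia.1 * ((k + β).choose (ia.2 + b) * (ia.2 + b).choose b) =
        (k + β).choose b * (k + α + β + s).choose s := by
    rw [show k + α + β + s = (k + α) + (k + β - b) by omega,
      Nat.add_choose_eq (k + α), Finset.mul_sum]
    refine Finset.sum_congr rfl fun ⟨i, a⟩ _ => ?_
    rw [Nat.choose_mul (Nat.le_add_left b a), Nat.add_sub_cancel]
    ring
  rw [expand, sum_antidiagonal_antidiagonal fun i a b => (-1) ^ b *
    ((k + α).choose i * ((k + β).choose (a + b) * (a + b).choose b) : ℕ) * u ^ (i + a)]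
  refine Finset.sum_congr rfl fun ⟨s, b⟩ hsb => ?_
  rw [mul_assoc ((-1) ^ b) (_ : ℝ), ← Nat.cast_mul,
    ← vandermonde s b (Finset.HasAntidiagonal.mem_antidiagonal.mp hsb), Nat.cast_sum,
    Finset.mul_sum, Finset.sum_mul]
  refine Finset.sum_congr rfl fun ⟨i, a⟩ hia => ?_
  rw [Finset.HasAntidiagonal.mem_antidiagonal.mp hia]

section Gegenbauer

/-- The Gegenbauer polynomial `C_l^{ν+1}` of integer parameter `ν + 1 ≥ 1`, as a normalized
derivative of the Chebyshev polynomial `U_{ν+l} = C_{ν+l}^1`. -/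
noncomputable def gegenbauerPoly (ν l : ℕ) : Polynomial ℝ :=
  Polynomial.C (1 / (2 ^ ν * ν ! : ℝ)) * derivative^[ν] (U ℝ (ν + l : ℕ))

theorem iterate_derivative_U_self (N : ℕ) :
    derivative^[N] (U ℝ N) = Polynomial.C (2 ^ N * N ! : ℝ) := by
  have hdeg : (derivative^[N] (U ℝ N)).natDegree = 0 := by
    simpa using Polynomial.natDegree_iterate_derivative (U ℝ N) N
  have hcoeff : (U ℝ N).coeff N = 2 ^ N := by
    simpa [Polynomial.leadingCoeff] using Polynomial.Chebyshev.leadingCoeff_U_natCast (R := ℝ) N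
  rw [Polynomial.eq_C_of_natDegree_eq_zero hdeg, Polynomial.coeff_iterate_derivative, zero_add,
    Nat.descFactorial_self, hcoeff, nsmul_eq_mul, mul_comm]

theorem hasDerivAt_rpow_mul_iterate_derivative_U (N : ℤ) (k : ℕ) {y : ℝ} (hy : y ∈ Ioo (-1 : ℝ) 1) :
    HasDerivAt
      (fun y => (1 - y ^ 2) ^ ((k + 1 : ℕ) + 1 / 2 : ℝ) * (derivative^[k + 1] (U ℝ N)).eval y)
      (-(((N + 1) ^ 2 - (k + 1) ^ 2) *
        ((1 - y ^ 2) ^ (k + 1 / 2 : ℝ) * (derivative^[k] (U ℝ N)).eval y))) y := by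
  have hpos : 0 < 1 - y ^ 2 := by nlinarith [hy.1, hy.2]
  have hbase : HasDerivAt (fun y : ℝ => 1 - y ^ 2) (-(2 * y)) y := by
    simpa using (hasDerivAt_pow 2 y).const_sub 1
  have hU : HasDerivAt (fun y => (derivative^[k + 1] (U ℝ N)).eval y)
      ((derivative^[k + 2] (U ℝ N)).eval y) y := by
    rw [Function.iterate_succ_apply' derivative (k + 1)]
    exact Polynomial.hasDerivAt _ y
  have ode := Polynomial.Chebyshev.one_sub_X_sq_mul_iterate_derivative_U_eval N k y
  have hrpow : (1 - y ^ 2) ^ ((k + 1 : ℕ) + 1 / 2 : ℝ) =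
      (1 - y ^ 2) * (1 - y ^ 2) ^ (k + 1 / 2 : ℝ) := by
    rw [mul_comm, ← rpow_add_one hpos.ne']
    push_cast
    ring_nf
  refine ((hbase.rpow_const (Or.inl hpos.ne')).mul hU).congr_deriv ?_
  rw [show ((k + 1 : ℕ) + 1 / 2 - 1 : ℝ) = k + 1 / 2 by push_cast; ring, hrpow]
  push_cast
  linear_combination (1 - y ^ 2) ^ (k + 1 / 2 : ℝ) * ode

theorem iteratedDeriv_one_sub_sq_rpow (j : ℕ) : ∀ i : ℕ, ∀ y ∈ Ioo (-1 : ℝ) 1,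
    iteratedDeriv j (fun y : ℝ => (1 - y ^ 2) ^ ((i + j : ℕ) + 1 / 2 : ℝ)) y =
      (-1) ^ j * j ! * (2 * (i + j) + 1).descFactorial j / (2 ^ (i + j) * (i + j)!) *
        ((1 - y ^ 2) ^ (i + 1 / 2 : ℝ) * (derivative^[i] (U ℝ (i + j : ℕ))).eval y) := by
  induction j with
  | zero =>
    intro i y _
    simp only [add_zero, iteratedDeriv_zero, iterate_derivative_U_self, Polynomial.eval_C]
    rw [pow_zero, Nat.factorial_zero, Nat.descFactorial_zero, Nat.cast_one]
    field_simp
  | succ j ih =>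
    intro i y hy
    have hprev := ih (i + 1)
    rw [show i + 1 + j = i + (j + 1) by ring] at hprev
    rw [iteratedDeriv_succ, (eventuallyEq_of_mem (Ioo_mem_nhds hy.1 hy.2) hprev).deriv_eq,
      ((hasDerivAt_rpow_mul_iterate_derivative_U _ i hy).const_mul _).deriv,
      Nat.descFactorial_succ, Nat.factorial_succ j,
      show 2 * (i + (j + 1)) + 1 - j = 2 * i + j + 3 by omega]
    push_cast
    ring

theorem Gamma_nat_add_three_halves (N : ℕ) :
    Gamma (N + 3 / 2) = (2 * N + 1)! * √π / (2 ^ (2 * N + 1) * N !) := by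
  have dup := Gamma_mul_Gamma_add_half (N + 1)
  rw [Gamma_nat_eq_factorial, show (N + 1 + 1 / 2 : ℝ) = N + 3 / 2 by ring,
    show (2 * (N + 1) : ℝ) = (2 * N + 1 : ℕ) + 1 by push_cast; ring, Gamma_nat_eq_factorial,
    show (1 - ((2 * N + 1 : ℕ) + 1) : ℝ) = -(2 * N + 1 : ℕ) by ring, rpow_neg zero_le_two,
    rpow_natCast] at dup
  field_simp
  field_simp at dup
  linear_combination dup

theorem gegenbauerFormula_eq_eval (n l : ℕ) {x : ℝ} (hx : x ∈ Ioo (-1 : ℝ) 1) :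
    gegenbauerFormula n l x = (gegenbauerPoly (2 * n) l).eval x := by
  have hpos : 0 < 1 - x ^ 2 := by nlinarith [hx.1, hx.2]
  have hderiv := iteratedDeriv_one_sub_sq_rpow l (2 * n) x hx
  have hdesc : (4 * n + l + 1)! * (2 * (2 * n + l) + 1).descFactorial l =
      (2 * (2 * n + l) + 1)! := by
    rw [← Nat.factorial_mul_descFactorial (show l ≤ 2 * (2 * n + l) + 1 by omega),
      show 2 * (2 * n + l) + 1 - l = 4 * n + l + 1 by omega]
  have hhalf := Gamma_nat_add_three_halves (2 * n)
  have hhalf' := Gamma_nat_add_three_halves (2 * n + l)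
  push_cast at hderiv hhalf hhalf'
  rw [gegenbauerFormula, gegenbauerPoly, hderiv, hhalf, hhalf', rpow_neg hpos.le,
    show (l + 4 * n + 2 : ℝ) = (4 * n + l + 1 : ℕ) + 1 by push_cast; ring, Gamma_nat_eq_factorial,
    show (4 * n + 2 : ℝ) = (4 * n + 1 : ℕ) + 1 by push_cast; ring, Gamma_nat_eq_factorial,
    Gamma_nat_eq_factorial, ← hdesc, show 2 * (2 * n) + 1 = 4 * n + 1 by ring,
    Polynomial.eval_mul, Polynomial.eval_C]
  have := (rpow_pos_of_pos hpos (2 * n + 1 / 2)).ne'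
  have hdesc_ne : ((2 * (2 * n + l) + 1).descFactorial l : ℝ) ≠ 0 := mod_cast fun h => by
    have := Nat.descFactorial_eq_zero_iff_lt.mp h
    omega
  push_cast
  field_simp
  rw [pow_right_comm, neg_one_sq, one_pow]
  ring

theorem IsGegenbauer.eq_eval {n : ℕ} {C : ℕ → ℝ → ℝ} (hC : IsGegenbauer n C) (l : ℕ) (x : ℝ) :
    C l x = (gegenbauerPoly (2 * n) l).eval x := by
  obtain ⟨⟨p, hp⟩, hformula⟩ := hC l
  have : p = gegenbauerPoly (2 * n) l := polynomial_eq_of_eqOn_Ioo (neg_one_lt_zero.trans one_pos)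
    fun y hy => by rw [← hp, hformula y hy, gegenbauerFormula_eq_eval n l hy]
  rw [hp, this]
end Gegenbauer

section DegreePairs

/-- The pairs `(m, k)` with `m + 2 * k = l`. They index the terms of total degree `l` in a
double expansion: `m` is the fiber degree and `k` the Jacobi degree. -/
def degreePairs (l : ℕ) : Finset (ℕ × ℕ) :=
  (Finset.range (l + 1) ×ˢ Finset.range (l + 1)).filter fun q => q.1 + 2 * q.2 = l

theorem mem_degreePairs {l : ℕ} {q : ℕ × ℕ} : q ∈ degreePairs l ↔ q.1 + 2 * q.2 = l := by
  simp only [degreePairs, Finset.mem_filter, Finset.mem_product, Finset.mem_range]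
  omega

theorem degreePairs_zero : degreePairs 0 = {(0, 0)} := by decide

theorem degreePairs_one : degreePairs 1 = {(1, 0)} := by decide

variable {M : Type*} [AddCommMonoid M]

theorem sum_degreePairs_add (a b l : ℕ) {f : ℕ → ℕ → M}
    (hf : ∀ m k, m < a ∨ k < b → f m k = 0) :
    ∑ q ∈ degreePairs (l + a + 2 * b), f q.1 q.2 =
      ∑ q ∈ degreePairs l, f (q.1 + a) (q.2 + b) := by
  refine (Finset.sum_of_injOn (fun q : ℕ × ℕ => (q.1 + a, q.2 + b)) ?_ ?_ ?_ fun _ _ => rfl).symm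
  · intro p _ q _ h
    simpa [Prod.ext_iff] using h
  · intro q hq
    rw [Finset.mem_coe, mem_degreePairs] at hq ⊢
    simp only
    omega
  · rintro ⟨m, k⟩ hq hnot
    refine hf m k (by_contra fun h => hnot ⟨(m - a, k - b), ?_, ?_⟩)
    · rw [mem_degreePairs] at hq
      rw [Finset.mem_coe, mem_degreePairs]
      simp only at hq ⊢
      omega
    · ext <;> simp only <;> omega

theorem sum_degreePairs_add_fst (a l : ℕ) {f : ℕ → ℕ → M} (hf : ∀ m < a, ∀ k, f m k = 0) :
    ∑ q ∈ degreePairs (l + a), f q.1 q.2 = ∑ q ∈ degreePairs l, f (q.1 + a) q.2 :=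
  sum_degreePairs_add a 0 l fun m k h => hf m (h.resolve_right k.not_lt_zero) k

theorem sum_degreePairs_succ_snd (l : ℕ) {f : ℕ → ℕ → M} (hf : ∀ m, f m 0 = 0) :
    ∑ q ∈ degreePairs (l + 2), f q.1 q.2 = ∑ q ∈ degreePairs l, f q.1 (q.2 + 1) :=
  sum_degreePairs_add 0 1 l (by simp [hf])

theorem sum_degreePairs_add_two (l : ℕ) {f g h : ℕ → ℕ → M}
    (succ_succ : ∀ m k, f (m + 1) (k + 1) = g m (k + 1) + h (m + 1) k)
    (succ_zero : ∀ m, f (m + 1) 0 = g m 0) (zero_succ : ∀ k, f 0 (k + 1) = h 0 k) :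
    ∑ q ∈ degreePairs (l + 2), f q.1 q.2 =
      ∑ q ∈ degreePairs (l + 1), g q.1 q.2 + ∑ q ∈ degreePairs l, h q.1 q.2 := by
  let g' : ℕ → ℕ → M := fun m k => m.casesOn 0 fun m => g m k
  let h' : ℕ → ℕ → M := fun m k => k.casesOn 0 fun k => h m k
  have sum_g : ∑ q ∈ degreePairs (l + 2), g' q.1 q.2 = ∑ q ∈ degreePairs (l + 1), g q.1 q.2 :=
    sum_degreePairs_add_fst 1 (l + 1) fun m hm _ => by obtain rfl := Nat.lt_one_iff.mp hm; rfl
  have sum_h : ∑ q ∈ degreePairs (l + 2), h' q.1 q.2 = ∑ q ∈ degreePairs l, h q.1 q.2 :=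
    sum_degreePairs_succ_snd l fun _ => rfl
  rw [← sum_g, ← sum_h, ← Finset.sum_add_distrib]
  refine Finset.sum_congr rfl fun ⟨m, k⟩ hq => ?_
  rw [mem_degreePairs] at hq
  rcases m with _ | m <;> rcases k with _ | k
  · simp at hq
  · simp [g', h', zero_succ]
  · simp [g', h', succ_zero]
  · simp [g', h', succ_succ]

theorem sum_degreePairs_degreePairs (l : ℕ) (f : ℕ → ℕ → ℕ → M) :
    ∑ q ∈ degreePairs l, ∑ q' ∈ degreePairs q.1, f q'.1 q'.2 q.2 =
      ∑ q ∈ degreePairs l, ∑ ij ∈ antidiagonal q.2, f q.1 ij.1 ij.2 := by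
  rw [Finset.sum_sigma', Finset.sum_sigma']
  refine Finset.sum_nbij' (fun p => ⟨(p.2.1, p.2.2 + p.1.2), (p.2.2, p.1.2)⟩)
    (fun p => ⟨(p.1.1 + 2 * p.2.1, p.2.2), (p.1.1, p.2.1)⟩) ?_ ?_ ?_ ?_ ?_ <;>
  simp only [Finset.mem_sigma, Finset.HasAntidiagonal.mem_antidiagonal, mem_degreePairs] <;>
  rintro ⟨⟨a, b⟩, c, d⟩ ⟨h, h'⟩ <;> grind

theorem tsum_eq_tsum_sum_degreePairs {f : ℕ × ℕ → ℝ} (hf : Summable f) :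
    ∑' q, f q = ∑' l, ∑ q ∈ degreePairs l, f q := by
  have hfiber := hf.hasSum.tsum_fiberwise (fun q : ℕ × ℕ => q.1 + 2 * q.2)
  rw [← hfiber.tsum_eq]
  refine tsum_congr fun l => ?_
  have : (fun q : ℕ × ℕ => q.1 + 2 * q.2) ⁻¹' {l} = degreePairs l := by
    ext q
    simp [mem_degreePairs]
  rw [this]
  exact Finset.tsum_subtype _ _

end DegreePairs

section ChebyshevExpansions

theorem U_eq_sum_degreePairs (l : ℕ) : U ℝ l =
    ∑ q ∈ degreePairs l, (-1) ^ q.2 * ((q.1 + q.2).choose q.2 : Polynomial ℝ) * (2 * X) ^ q.1 := by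
  induction l using Nat.twoStepInduction with
  | zero => simp [degreePairs_zero]
  | one => simp [degreePairs_one]
  | more l ih ih' =>
    have step := Polynomial.Chebyshev.U_add_two ℝ l
    push_cast at ih' step ⊢
    rw [step, ih, ih', sub_eq_add_neg, Finset.mul_sum, ← Finset.sum_neg_distrib]
    refine (sum_degreePairs_add_two l
      (f := fun m k => (-1) ^ k * ((m + k).choose k : Polynomial ℝ) * (2 * X) ^ m)
      (g := fun m k => 2 * X * ((-1) ^ k * ((m + k).choose k : Polynomial ℝ) * (2 * X) ^ m))
      (h := fun m k => -((-1) ^ k * ((m + k).choose k : Polynomial ℝ) * (2 * X) ^ m))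
      (fun m k => ?_) (fun m => ?_) (fun k => ?_)).symm
    · rw [show m + 1 + (k + 1) = (m + 1 + k) + 1 by ring, Nat.choose_succ_succ,
        show m + (k + 1) = m + 1 + k by ring]
      push_cast
      ring
    · simp only [Nat.choose_zero_right]
      ring
    · simp [pow_succ]

/-- The ballot number `(m + 1) / (m + j + 1) * (m + 2j).choose j`, the coefficient of `U_m` in
`(2X)^(m + 2j)`. -/
noncomputable def ballot (m j : ℕ) : ℝ := (m + 1) * (m + 2 * j)! / (j ! * (m + j + 1)!)

theorem ballot_succ_succ (m j : ℕ) :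
    ballot (m + 1) (j + 1) = ballot m (j + 1) + ballot (m + 2) j := by
  simp only [ballot, show m + 1 + 2 * (j + 1) = m + 2 * j + 2 + 1 by ring,
    show m + 2 * (j + 1) = m + 2 * j + 1 + 1 by ring,
    show m + 2 + 2 * j = m + 2 * j + 1 + 1 by ring,
    show m + 1 + (j + 1) + 1 = m + j + 1 + 1 + 1 by ring,
    show m + (j + 1) + 1 = m + j + 1 + 1 by ring,
    show m + 2 + j + 1 = m + j + 1 + 1 + 1 by ring, Nat.factorial_succ]
  push_cast
  field_simp
  ring

theorem ballot_zero_right (m : ℕ) : ballot m 0 = 1 := by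
  simp only [ballot, Nat.factorial_succ, mul_zero, add_zero]
  push_cast
  field_simp
  simp

theorem ballot_zero_succ (j : ℕ) : ballot 0 (j + 1) = ballot 1 j := by
  simp only [ballot, show 0 + 2 * (j + 1) = 2 * j + 1 + 1 by ring,
    show 1 + 2 * j = 2 * j + 1 by ring, show 0 + (j + 1) + 1 = j + 1 + 1 by ring,
    show 1 + j + 1 = j + 1 + 1 by ring, Nat.factorial_succ]
  push_cast
  field_simp
  ring

theorem two_mul_X_pow_eq_sum_degreePairs (p : ℕ) : (2 * X : Polynomial ℝ) ^ p =
    ∑ q ∈ degreePairs p, Polynomial.C (ballot q.1 q.2) * U ℝ q.1 := by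
  induction p using Nat.twoStepInduction with
  | zero => simp [degreePairs_zero, ballot_zero_right]
  | one => simp [degreePairs_one, ballot_zero_right]
  | more p _ ih =>
    have two_X_mul_U (m : ℕ) : 2 * X * U ℝ m = U ℝ (m + 1) + U ℝ (m - 1) := by
      rw [Polynomial.Chebyshev.U_add_one]
      ring
    have lower : ∑ q ∈ degreePairs (p + 1), Polynomial.C (ballot q.1 q.2) * U ℝ (q.1 - 1) =
        ∑ q ∈ degreePairs p, Polynomial.C (ballot (q.1 + 1) q.2) * U ℝ q.1 := by
      simpa using sum_degreePairs_add_fst 1 p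
        (f := fun m k => Polynomial.C (ballot m k) * U ℝ (m - 1)) (by simp)
    rw [pow_succ', ih, Finset.mul_sum]
    simp only [mul_left_comm (2 * X), two_X_mul_U, mul_add, Finset.sum_add_distrib]
    rw [lower]
    refine (sum_degreePairs_add_two p (f := fun m k => Polynomial.C (ballot m k) * U ℝ m)
      (g := fun m k => Polynomial.C (ballot m k) * U ℝ (m + 1))
      (h := fun m k => Polynomial.C (ballot (m + 1) k) * U ℝ m)
      (fun m k => ?_) (fun m => ?_) (fun k => ?_)).symm
    · simp [ballot_succ_succ, add_mul]
    · simp [ballot_zero_right]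
    · simp [ballot_zero_succ]

theorem eval_gegenbauerPoly (ν l : ℕ) (z : ℝ) : (gegenbauerPoly ν l).eval z =
    ∑ q ∈ degreePairs l, (-1) ^ q.2 * (ν + q.1 + q.2)! / (ν ! * q.1 ! * q.2 !) * (2 * z) ^ q.1 := by
  have term_iterate_derivative (m k : ℕ) :
      (derivative^[ν] ((-1) ^ k * ((m + k).choose k : Polynomial ℝ) * (2 * X) ^ m)).eval z =
        (-1) ^ k * (m + k).choose k * (2 ^ m * (m.descFactorial ν * z ^ (m - ν))) := by
    rw [show (-1) ^ k * ((m + k).choose k : Polynomial ℝ) * (2 * X) ^ m =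
        Polynomial.C ((-1) ^ k * (m + k).choose k * 2 ^ m : ℝ) * X ^ m by
          simp only [mul_pow, map_mul, map_pow, map_neg, map_one, map_natCast, map_ofNat]; ring,
      Polynomial.iterate_derivative_C_mul, Polynomial.iterate_derivative_X_pow_eq_natCast_mul]
    simp [mul_assoc]
  rw [gegenbauerPoly, U_eq_sum_degreePairs, Polynomial.iterate_derivative_sum, Polynomial.eval_mul,
    Polynomial.eval_C, Polynomial.eval_finsetSum]
  simp only [term_iterate_derivative]
  rw [add_comm ν l, sum_degreePairs_add_fst ν l
    (f := fun m k => (-1) ^ k * (m + k).choose k * (2 ^ m * (m.descFactorial ν * z ^ (m - ν))))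
    (fun m hm k => by simp [Nat.descFactorial_of_lt hm]), Finset.mul_sum]
  refine Finset.sum_congr rfl fun ⟨m, k⟩ _ => ?_
  have hdesc : ((m + ν).descFactorial ν : ℝ) = (m + ν)! / m ! := by
    rw [Nat.add_descFactorial_eq_ascFactorial, eq_div_iff (by positivity), mul_comm]
    exact mod_cast Nat.factorial_mul_ascFactorial m ν
  have hchoose : ((m + ν + k).choose k : ℝ) = (m + ν + k)! / ((m + ν)! * k !) := by
    rw [← Nat.choose_symm_add, Nat.cast_add_choose]
  rw [Nat.add_sub_cancel, hchoose, hdesc, add_comm ν m]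
  field_simp
  ring

end ChebyshevExpansions

section Zonal

/-- The coefficient of `sinh ((m + 1) * y)` in `(α + 1) * sinh y * C_{m+2k}^{α+2}(x * cosh y)`. With
`α = 2n - 1`, `x = cos r` it is the factor of the `(m, k)` term of the subelliptic heat kernel
that depends on `r` only. -/
noncomputable def zonalCoeff (α : ℕ) (x : ℝ) (m k : ℕ) : ℝ :=
  (m + 1) * (k + m + α + 1).choose α * x ^ m * (jacobiPoly k α (m + 1)).eval (2 * x ^ 2 - 1)

theorem zonalCoeff_eq_sum (α : ℕ) (x : ℝ) (m k : ℕ) : zonalCoeff α x m k =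
    ∑ ij ∈ antidiagonal k, (-1) ^ ij.2 * (α + 1 + (m + 2 * ij.1) + ij.2)! /
      (α ! * (m + 2 * ij.1)! * ij.2 !) * ballot m ij.1 * x ^ (m + 2 * ij.1) := by
  rw [zonalCoeff, eval_jacobiPoly_two_mul_sub_one, Finset.mul_sum]
  refine Finset.sum_congr rfl fun ⟨j, i⟩ hij => ?_
  obtain rfl := Finset.HasAntidiagonal.mem_antidiagonal.mp hij
  have hchoose : ((j + i + m + α + 1).choose α : ℝ) =
      (j + i + m + α + 1)! / (α ! * (j + i + m + 1)!) := by
    rw [show j + i + m + α + 1 = α + (j + i + m + 1) by ring, Nat.cast_add_choose]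
  have hchoose_left : ((j + i + (m + 1)).choose i : ℝ) =
      (j + i + m + 1)! / (i ! * (m + j + 1)!) := by
    rw [show j + i + (m + 1) = i + (m + j + 1) by ring, Nat.cast_add_choose,
      show i + (m + j + 1) = j + i + m + 1 by ring]
  have hchoose_right : ((j + i + α + (m + 1) + j).choose j : ℝ) =
      (α + 1 + (m + 2 * j) + i)! / (j ! * (j + i + m + α + 1)!) := by
    rw [show j + i + α + (m + 1) + j = j + (j + i + m + α + 1) by ring, Nat.cast_add_choose,
      show j + (j + i + m + α + 1) = α + 1 + (m + 2 * j) + i by ring]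
  rw [hchoose, hchoose_left, hchoose_right, ballot, pow_add x, pow_mul x]
  field_simp

theorem two_cosh_pow_mul_sinh (p : ℕ) (y : ℝ) : (2 * cosh y) ^ p * sinh y =
    ∑ q ∈ degreePairs p, ballot q.1 q.2 * sinh ((q.1 + 1) * y) := by
  have h := congrArg (Polynomial.eval (cosh y)) (two_mul_X_pow_eq_sum_degreePairs p)
  simp only [Polynomial.eval_finsetSum, Polynomial.eval_pow, Polynomial.eval_mul,
    Polynomial.eval_ofNat, Polynomial.eval_X, Polynomial.eval_C] at h
  rw [h, Finset.sum_mul]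
  refine Finset.sum_congr rfl fun q _ => ?_
  rw [mul_assoc, Polynomial.Chebyshev.U_real_cosh, Int.cast_natCast]

theorem sinh_mul_eval_gegenbauerPoly (α l : ℕ) (x y : ℝ) :
    (α + 1) * (sinh y * (gegenbauerPoly (α + 1) l).eval (x * cosh y)) =
      ∑ q ∈ degreePairs l, zonalCoeff α x q.1 q.2 * sinh ((q.1 + 1) * y) := by
  let c (m j i : ℕ) : ℝ := (-1) ^ i * (α + 1 + (m + 2 * j) + i)! / (α ! * (m + 2 * j)! * i !) *
    ballot m j * x ^ (m + 2 * j) * sinh ((m + 1) * y)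
  calc (α + 1) * (sinh y * (gegenbauerPoly (α + 1) l).eval (x * cosh y))
      = ∑ q ∈ degreePairs l, ∑ q' ∈ degreePairs q.1, c q'.1 q'.2 q.2 := by
        rw [eval_gegenbauerPoly, Finset.mul_sum, Finset.mul_sum]
        refine Finset.sum_congr rfl fun ⟨p, i⟩ _ => ?_
        have expand := two_cosh_pow_mul_sinh p y
        have key : (α + 1) * (sinh y * ((-1) ^ i * (α + 1 + p + i)! / ((α + 1)! * p ! * i !) *
            (2 * (x * cosh y)) ^ p)) = (-1) ^ i * (α + 1 + p + i)! / (α ! * p ! * i !) * x ^ p *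
            ((2 * cosh y) ^ p * sinh y) := by
          rw [Nat.factorial_succ, mul_left_comm 2 x, mul_pow]
          push_cast
          field_simp
        rw [key, expand, Finset.mul_sum]
        refine Finset.sum_congr rfl fun ⟨m, j⟩ hq => ?_
        obtain rfl := mem_degreePairs.mp hq
        simp only [c]
        ring
    _ = ∑ q ∈ degreePairs l, ∑ ij ∈ antidiagonal q.2, c q.1 ij.1 ij.2 :=
        sum_degreePairs_degreePairs l c
    _ = ∑ q ∈ degreePairs l, zonalCoeff α x q.1 q.2 * sinh ((q.1 + 1) * y) := by
        simp only [zonalCoeff_eq_sum, Finset.sum_mul, c]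

theorem abs_zonalCoeff_le (α : ℕ) {x : ℝ} (hx : |x| ≤ 1) (m k : ℕ) :
    |zonalCoeff α x m k| ≤ (2 * k + m + α + 2 : ℝ) ^ (α + 1 + k) := by
  have hx2 : x ^ 2 ∈ Icc (0 : ℝ) 1 := ⟨sq_nonneg x, (sq_le_one_iff_abs_le_one x).mpr hx⟩
  have hm : (m + 1 : ℝ) ≤ 2 * k + m + α + 2 := by
    linarith [k.cast_nonneg (α := ℝ), α.cast_nonneg (α := ℝ)]
  have hchoose : ((k + m + α + 1).choose α : ℝ) ≤ (2 * k + m + α + 2 : ℝ) ^ α :=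
    mod_cast (Nat.choose_le_pow _ _).trans (Nat.pow_le_pow_left (by omega) α)
  have hpow : |x| ^ m ≤ 1 := pow_le_one₀ (abs_nonneg x) hx
  have hjacobi : |(jacobiPoly k α (m + 1)).eval (2 * x ^ 2 - 1)| ≤
      (2 * k + m + α + 2 : ℝ) ^ k :=
    (abs_eval_jacobiPoly_le k α (m + 1) hx2).trans
      (mod_cast (Nat.choose_le_pow _ _).trans (Nat.pow_le_pow_left (by omega) k))
  calc |zonalCoeff α x m k|
      = (m + 1) * (k + m + α + 1).choose α * |x| ^ m *
          |(jacobiPoly k α (m + 1)).eval (2 * x ^ 2 - 1)| := by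
        rw [zonalCoeff, abs_mul, abs_mul, abs_pow, abs_of_nonneg (by positivity)]
    _ ≤ (2 * k + m + α + 2) * (2 * k + m + α + 2) ^ α * 1 * (2 * k + m + α + 2) ^ k := by gcongr
    _ = (2 * k + m + α + 2 : ℝ) ^ (α + 1 + k) := by ring

end Zonal

section Gaussian

theorem abs_sinh_le_exp_abs (x : ℝ) : |sinh x| ≤ exp |x| := by
  rw [abs_sinh, sinh_eq]
  linarith [exp_pos |x|, exp_pos (-|x|)]

variable {t : ℝ}

theorem exp_mul_mul_exp_neg_sq_div (ht : 0 < t) (b y : ℝ) :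
    exp (b * y) * exp (-y ^ 2 / (4 * t)) =
      exp (t * b ^ 2) * exp (-(1 / (4 * t)) * (y - 2 * t * b) ^ 2) := by
  rw [← exp_add, ← exp_add]
  congr 1
  field_simp
  ring

theorem integrable_exp_mul_mul_exp_neg_sq_div (ht : 0 < t) (b : ℝ) :
    Integrable fun y => exp (b * y) * exp (-y ^ 2 / (4 * t)) := by
  simp only [exp_mul_mul_exp_neg_sq_div ht]
  exact ((integrable_exp_neg_mul_sq (by positivity)).comp_sub_right (2 * t * b)).const_mul _

theorem integral_exp_mul_mul_exp_neg_sq_div (ht : 0 < t) (b : ℝ) :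
    ∫ y, exp (b * y) * exp (-y ^ 2 / (4 * t)) = 2 * √(π * t) * exp (t * b ^ 2) := by
  have hsqrt : √(π / (1 / (4 * t))) = 2 * √(π * t) := by
    rw [show π / (1 / (4 * t)) = 2 ^ 2 * (π * t) by field_simp; norm_num,
      sqrt_mul (sq_nonneg 2), sqrt_sq zero_le_two]
  simp only [exp_mul_mul_exp_neg_sq_div ht]
  rw [integral_const_mul,
    integral_sub_right_eq_self (fun y => exp (-(1 / (4 * t)) * y ^ 2)), integral_gaussian, hsqrt,
    mul_comm]

theorem integrable_exp_mul_sin_mul_exp_neg_sq_div (ht : 0 < t) (b ω : ℝ) :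
    Integrable fun y => exp (b * y) * sin (ω * y) * exp (-y ^ 2 / (4 * t)) := by
  refine (integrable_exp_mul_mul_exp_neg_sq_div ht b).mono' (by fun_prop) (.of_forall fun y => ?_)
  rw [mul_right_comm, norm_mul, norm_of_nonneg (by positivity)]
  exact mul_le_of_le_one_right (by positivity) (abs_sin_le_one _)

theorem integral_exp_mul_sin_mul_exp_neg_sq_div (ht : 0 < t) (b ω : ℝ) :
    ∫ y, exp (b * y) * sin (ω * y) * exp (-y ^ 2 / (4 * t)) =
      2 * √(π * t) * (exp (t * (b ^ 2 - ω ^ 2)) * sin (2 * ω * b * t)) := by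
  have hre : ((-1 / (4 * t) : ℝ) : ℂ).re < 0 :=
    div_neg_of_neg_of_pos neg_one_lt_zero (by positivity)
  have him (y : ℝ) : exp (b * y) * sin (ω * y) * exp (-y ^ 2 / (4 * t)) =
      (Complex.exp ((-1 / (4 * t) : ℝ) * y ^ 2 + (b + ω * Complex.I) * y + 0)).im := by
    rw [show ((-1 / (4 * t) : ℝ) * y ^ 2 + (b + ω * Complex.I) * y + 0 : ℂ) =
        ((b * y + -y ^ 2 / (4 * t) : ℝ) : ℂ) + (ω * y : ℝ) * Complex.I by push_cast; ring,
      Complex.exp_add, ← Complex.ofReal_exp, Complex.im_ofReal_mul, Complex.exp_ofReal_mul_I_im,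
      exp_add]
    ring
  have hsqrt : (π / -((-1 / (4 * t) : ℝ) : ℂ)) ^ (1 / 2 : ℂ) = (2 * √(π * t) : ℝ) := by
    rw [show (π / -((-1 / (4 * t) : ℝ) : ℂ)) = ((2 ^ 2 * (π * t) : ℝ) : ℂ) by
        rw [← Complex.ofReal_neg, ← Complex.ofReal_div]; congr 1; field_simp; norm_num,
      show (1 / 2 : ℂ) = ((1 / 2 : ℝ) : ℂ) by norm_num, ← Complex.ofReal_cpow (by positivity),
      ← sqrt_eq_rpow, sqrt_mul (sq_nonneg 2), sqrt_sq zero_le_two]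
  have hexponent : (0 : ℂ) - (b + ω * Complex.I) ^ 2 / (4 * (-1 / (4 * t) : ℝ)) =
      (t * (b ^ 2 - ω ^ 2) : ℝ) + (2 * ω * b * t : ℝ) * Complex.I := by
    have : (t : ℂ) ≠ 0 := mod_cast ht.ne'
    push_cast
    field_simp
    linear_combination (t * ω ^ 2 : ℂ) * Complex.I_sq
  calc ∫ y, exp (b * y) * sin (ω * y) * exp (-y ^ 2 / (4 * t))
      = (∫ y : ℝ, Complex.exp ((-1 / (4 * t) : ℝ) * y ^ 2 + (b + ω * Complex.I) * y + 0)).im := by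
        simp only [him]
        exact integral_im (integrable_cexp_quadratic' hre _ _)
    _ = 2 * √(π * t) * (exp (t * (b ^ 2 - ω ^ 2)) * sin (2 * ω * b * t)) := by
        rw [integral_cexp_quadratic hre, hsqrt, hexponent, Complex.exp_add, ← Complex.ofReal_exp,
          Complex.im_ofReal_mul, Complex.im_ofReal_mul, Complex.exp_ofReal_mul_I_im]

theorem sinh_mul_sin_mul_exp_eq_sub (b ω y : ℝ) :
    sinh (b * y) * (sin (ω * y) * exp (-y ^ 2 / (4 * t))) =
      1 / 2 * (exp (b * y) * sin (ω * y) * exp (-y ^ 2 / (4 * t)) -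
        exp (-b * y) * sin (ω * y) * exp (-y ^ 2 / (4 * t))) := by
  rw [sinh_eq, neg_mul]
  ring

theorem integrable_sinh_mul_sin_mul_exp_neg_sq_div (ht : 0 < t) (b ω : ℝ) :
    Integrable fun y => sinh (b * y) * (sin (ω * y) * exp (-y ^ 2 / (4 * t))) := by
  simp only [sinh_mul_sin_mul_exp_eq_sub]
  exact ((integrable_exp_mul_sin_mul_exp_neg_sq_div ht b ω).sub
    (integrable_exp_mul_sin_mul_exp_neg_sq_div ht (-b) ω)).const_mul _

theorem integral_Ioi_sinh_mul_sin_mul_exp_neg_sq_div (ht : 0 < t) (b ω : ℝ) :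
    ∫ y in Ioi 0, sinh (b * y) * (sin (ω * y) * exp (-y ^ 2 / (4 * t))) =
      √(π * t) * (exp (t * (b ^ 2 - ω ^ 2)) * sin (2 * ω * b * t)) := by
  have heven (y : ℝ) : sinh (b * |y|) * (sin (ω * |y|) * exp (-|y| ^ 2 / (4 * t))) =
      sinh (b * y) * (sin (ω * y) * exp (-y ^ 2 / (4 * t))) := by
    rcases abs_choice y with h | h <;> simp [h]
  have hhalf := integral_comp_abs
    (f := fun y => sinh (b * y) * (sin (ω * y) * exp (-y ^ 2 / (4 * t))))
  have hline : ∫ y, sinh (b * y) * (sin (ω * y) * exp (-y ^ 2 / (4 * t))) =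
      2 * (√(π * t) * (exp (t * (b ^ 2 - ω ^ 2)) * sin (2 * ω * b * t))) := by
    simp only [sinh_mul_sin_mul_exp_eq_sub]
    rw [integral_const_mul, integral_sub (integrable_exp_mul_sin_mul_exp_neg_sq_div ht b ω)
      (integrable_exp_mul_sin_mul_exp_neg_sq_div ht (-b) ω),
      integral_exp_mul_sin_mul_exp_neg_sq_div ht, integral_exp_mul_sin_mul_exp_neg_sq_div ht,
      neg_sq, mul_neg, neg_mul, sin_neg]
    ring
  simp only [heven] at hhalf
  linarith

theorem integral_Ioi_norm_sinh_mul_sin_mul_exp_neg_sq_div_le (ht : 0 < t) (b ω : ℝ) :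
    ∫ y in Ioi 0, ‖sinh (b * y) * (sin (ω * y) * exp (-y ^ 2 / (4 * t)))‖ ≤
      2 * √(π * t) * exp (t * b ^ 2) := by
  have hbound {y : ℝ} (hy : y ∈ Ioi 0) :
      ‖sinh (b * y) * (sin (ω * y) * exp (-y ^ 2 / (4 * t)))‖ ≤
        exp (|b| * y) * exp (-y ^ 2 / (4 * t)) := by
    have hsinh : |sinh (b * y)| ≤ exp (|b| * y) := by
      simpa only [abs_mul, abs_of_pos (mem_Ioi.mp hy)] using abs_sinh_le_exp_abs (b * y)
    rw [norm_mul, norm_mul, norm_eq_abs, norm_eq_abs, norm_of_nonneg (exp_pos _).le]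
    gcongr
    exact mul_le_of_le_one_left (exp_pos _).le (abs_sin_le_one _)
  have hint := integrable_exp_mul_mul_exp_neg_sq_div ht |b|
  calc ∫ y in Ioi 0, ‖sinh (b * y) * (sin (ω * y) * exp (-y ^ 2 / (4 * t)))‖
      ≤ ∫ y in Ioi 0, exp (|b| * y) * exp (-y ^ 2 / (4 * t)) :=
        setIntegral_mono_on (integrable_sinh_mul_sin_mul_exp_neg_sq_div ht b ω).norm.integrableOn
          hint.integrableOn measurableSet_Ioi fun _ => hbound
    _ ≤ ∫ y, exp (|b| * y) * exp (-y ^ 2 / (4 * t)) :=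
        setIntegral_le_integral hint (.of_forall fun _ => by positivity)
    _ = 2 * √(π * t) * exp (t * b ^ 2) := by
        rw [integral_exp_mul_mul_exp_neg_sq_div ht, sq_abs]

theorem abs_sinh_mul_le (ht : 0 < t) (b y : ℝ) :
    |sinh (b * y)| ≤ exp (t * b ^ 2) * exp (y ^ 2 / (4 * t)) := by
  refine (abs_sinh_le_exp_abs _).trans ?_
  rw [← exp_add, exp_le_exp, ← sub_nonneg]
  have hsq : t * b ^ 2 + y ^ 2 / (4 * t) - |b * y| = t * (|b| - |y| / (2 * t)) ^ 2 := by
    rw [abs_mul, ← sq_abs b, ← sq_abs y]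
    field_simp
    ring
  rw [hsq]
  positivity

variable {ι : Type*} {a b : ι → ℝ}

theorem summable_mul_sinh (ht : 0 < t) (hab : Summable fun i => |a i| * exp (t * b i ^ 2))
    (y : ℝ) : Summable fun i => a i * sinh (b i * y) := by
  refine .of_norm_bounded (hab.mul_right (exp (y ^ 2 / (4 * t)))) fun i => ?_
  rw [norm_mul, norm_eq_abs, norm_eq_abs, mul_assoc]
  gcongr
  exact abs_sinh_mul_le ht _ _

theorem integral_Ioi_tsum_mul_sinh_mul_sin [Countable ι] (ht : 0 < t)
    (hab : Summable fun i => |a i| * exp (t * b i ^ 2)) (ω : ℝ) :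
    ∫ y in Ioi 0, (∑' i, a i * sinh (b i * y)) * (sin (ω * y) * exp (-y ^ 2 / (4 * t))) =
      √(π * t) * ∑' i, a i * (exp (t * (b i ^ 2 - ω ^ 2)) * sin (2 * ω * b i * t)) := by
  let f (i : ι) (y : ℝ) : ℝ := a i * (sinh (b i * y) * (sin (ω * y) * exp (-y ^ 2 / (4 * t))))
  have hf (i : ι) : Integrable (f i) (volume.restrict (Ioi 0)) :=
    ((integrable_sinh_mul_sin_mul_exp_neg_sq_div ht (b i) ω).const_mul (a i)).integrableOn
  have hf_norm : Summable fun i => ∫ y in Ioi 0, ‖f i y‖ := by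
    refine .of_nonneg_of_le (fun i => integral_nonneg fun _ => norm_nonneg _) (fun i => ?_)
      (hab.mul_left (2 * √(π * t)))
    simp only [f, norm_mul (a i), integral_const_mul, norm_eq_abs (a i)]
    rw [mul_left_comm]
    gcongr
    exact integral_Ioi_norm_sinh_mul_sin_mul_exp_neg_sq_div_le ht (b i) ω
  calc ∫ y in Ioi 0, (∑' i, a i * sinh (b i * y)) * (sin (ω * y) * exp (-y ^ 2 / (4 * t)))
      = ∫ y in Ioi 0, ∑' i, f i y := by simp only [← tsum_mul_right, mul_assoc, f]
    _ = ∑' i, ∫ y in Ioi 0, f i y :=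
        (hasSum_integral_of_summable_integral_norm hf hf_norm).tsum_eq.symm
    _ = √(π * t) * ∑' i, a i * (exp (t * (b i ^ 2 - ω ^ 2)) * sin (2 * ω * b i * t)) := by
        simp only [f, integral_const_mul, integral_Ioi_sinh_mul_sin_mul_exp_neg_sq_div ht]
        rw [← tsum_mul_left]
        exact tsum_congr fun i => mul_left_comm _ _ _

theorem integral_Ioi_tsum_mul_sinh_mul_sin_div [Countable ι] (ht : 0 < t)
    (hab : Summable fun i => |a i| * exp (t * b i ^ 2)) (η : ℝ) :
    ∫ y in Ioi 0, (∑' i, a i * sinh (b i * y)) *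
        (sin (η * y / (2 * t)) * exp (-(y ^ 2 - η ^ 2) / (4 * t))) =
      √(π * t) * ∑' i, a i * (exp (t * b i ^ 2) * sin (b i * η)) := by
  have hexponent (y : ℝ) : -(y ^ 2 - η ^ 2) / (4 * t) = -y ^ 2 / (4 * t) + η ^ 2 / (4 * t) := by
    ring
  have hterm (i : ι) : exp (t * (b i ^ 2 - (η / (2 * t)) ^ 2)) *
      sin (2 * (η / (2 * t)) * b i * t) * exp (η ^ 2 / (4 * t)) =
        exp (t * b i ^ 2) * sin (b i * η) := by
    rw [mul_right_comm, ← exp_add]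
    congr 2 <;> field_simp
    ring
  simp only [hexponent, exp_add, mul_div_right_comm η, ← mul_assoc]
  rw [integral_mul_const]
  simp only [mul_assoc]
  rw [integral_Ioi_tsum_mul_sinh_mul_sin ht hab, mul_assoc, ← tsum_mul_right]
  simp only [mul_assoc, ← hterm]

end Gaussian
section Summability

theorem summable_pow_mul_exp_neg_mul_sq {c : ℝ} (hc : 0 < c) {K : ℝ} (hK : 0 < K) :
    Summable fun k : ℕ => K ^ k * exp (-(c * k ^ 2)) := by
  refine Summable.of_nonneg_of_le (fun k => by positivity) (fun k => ?_)
    (summable_exp_neg_nat.mul_left (exp ((log K + 1) ^ 2 / (4 * c))))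
  rw [← exp_log (pow_pos hK k), log_pow, ← exp_add, ← exp_add, exp_le_exp, ← sub_nonneg]
  have : (log K + 1) ^ 2 / (4 * c) + -k - (k * log K + -(c * k ^ 2)) =
      ((log K + 1) - 2 * c * k) ^ 2 / (4 * c) := by
    field_simp
    ring
  rw [this]
  positivity

theorem add_le_mul_exp {A ε s : ℝ} (hA : 0 ≤ A) (hε : 0 < ε) (hs : 0 ≤ s) :
    A + s ≤ (A + 1 / ε) * exp (ε * s) := by
  have hexp : ε * s + 1 ≤ exp (ε * s) := add_one_le_exp _
  have hone : 1 ≤ exp (ε * s) := one_le_exp (by positivity)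
  have hs' : s ≤ 1 / ε * exp (ε * s) := by
    rw [one_div, ← div_eq_inv_mul, le_div_iff₀ hε]
    linarith
  nlinarith

theorem summable_pow_mul_exp_neg {A c : ℝ} (hA : 0 ≤ A) (hc : 0 < c) (p : ℕ) :
    Summable fun q : ℕ × ℕ =>
      (A + (q.1 + 2 * q.2)) ^ (p + q.2) * exp (-(c * (q.2 * (q.2 + q.1) + q.1))) := by
  obtain ⟨ε, hε, hε_eq⟩ : ∃ ε : ℝ, 0 < ε ∧ ε * (2 * p + 4) = c :=
    ⟨c / (2 * p + 4), by positivity, by field_simp⟩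
  set K : ℝ := A + 1 / ε
  have hK : 0 < K := by positivity
  have hsum_fst : Summable fun m : ℕ => K ^ p * exp (m * -(c / 2)) :=
    (summable_exp_nat_mul_iff.mpr (by linarith)).mul_left _
  have hsum_snd : Summable fun k : ℕ => (K * exp c) ^ k * exp (-(c / 2 * k ^ 2)) :=
    summable_pow_mul_exp_neg_mul_sq (by positivity) (mul_pos hK (exp_pos c))
  refine Summable.of_nonneg_of_le (fun q => by positivity) (fun ⟨m, k⟩ => ?_)
    (hsum_fst.mul_of_nonneg hsum_snd (fun _ => by positivity) fun _ => by positivity)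
  have hpow : (A + (m + 2 * k)) ^ (p + k) ≤ K ^ (p + k) * exp ((p + k) * (ε * (m + 2 * k))) := by
    have := pow_le_pow_left₀ (by positivity)
      (add_le_mul_exp hA hε (s := m + 2 * k) (by positivity)) (p + k)
    rwa [mul_pow, ← exp_nat_mul, Nat.cast_add] at this
  have hexponent : (p + k) * (ε * (m + 2 * k)) - c * (k * (k + m) + m) ≤
      m * -(c / 2) + (k * c - c / 2 * k ^ 2) := by
    rw [← hε_eq, ← sub_nonneg]
    ring_nf
    positivity
  calc (A + (m + 2 * k)) ^ (p + k) * exp (-(c * (k * (k + m) + m)))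
      ≤ K ^ (p + k) * exp ((p + k) * (ε * (m + 2 * k))) * exp (-(c * (k * (k + m) + m))) := by
        gcongr
    _ = K ^ (p + k) * exp ((p + k) * (ε * (m + 2 * k)) - c * (k * (k + m) + m)) := by
        rw [mul_assoc, ← exp_add, sub_eq_add_neg]
    _ ≤ K ^ (p + k) * exp (m * -(c / 2) + (k * c - c / 2 * k ^ 2)) := by gcongr
    _ = K ^ p * exp (m * -(c / 2)) * ((K * exp c) ^ k * exp (-(c / 2 * k ^ 2))) := by
        rw [exp_add, sub_eq_add_neg, exp_add, mul_pow, ← exp_nat_mul c, pow_add]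
        ring

end Summability

section Kernel

/-- The contribution of degree `m + 2k` to the coefficient of `sinh ((m + 1) * y)` in
`sinh y * q_t(x * cosh y)`, where `q_t` is the Riemannian heat kernel of `S^{4n+3}`; the pair `q`
is `(m, k)`. -/
noncomputable def heatCoeff (n : ℕ) (t x : ℝ) (q : ℕ × ℕ) : ℝ :=
  Gamma (2 * n) / (2 * π ^ (2 * n + 2)) * (q.1 + 2 * q.2 + 2 * n + 1) *
    exp (-((q.1 + 2 * q.2) * (q.1 + 2 * q.2 + 4 * n + 2)) * t) *
    zonalCoeff (2 * n - 1) x q.1 q.2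

theorem exp_riemannian_eigenvalue_mul_exp (m k n t : ℝ) :
    exp (-((m + 2 * k) * (m + 2 * k + 4 * n + 2)) * t) * exp (t * (m + 1) ^ 2) =
      exp t * exp (-(4 * (k * (k + 2 * n + m + 1) + n * m)) * t) := by
  rw [← exp_add, ← exp_add]
  ring_nf

theorem summable_abs_heatCoeff_mul_exp {n : ℕ} (hn : 1 ≤ n) {t x : ℝ} (ht : 0 < t)
    (hx : |x| ≤ 1) :
    Summable fun q : ℕ × ℕ => |heatCoeff n t x q| * exp (t * (q.1 + 1 : ℝ) ^ 2) := by
  have hn' : (1 : ℝ) ≤ n := mod_cast hn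
  have hcast : ((2 * n - 1 : ℕ) : ℝ) + 1 = 2 * n := by
    rw [← Nat.cast_add_one, Nat.sub_add_cancel (by omega)]
    push_cast
    ring
  let c : ℝ := Gamma (2 * n) / (2 * π ^ (2 * n + 2))
  have : 0 ≤ c := div_nonneg (Gamma_nonneg_of_nonneg (by positivity)) (by positivity)
  refine .of_nonneg_of_le (fun q => by positivity) (fun ⟨m, k⟩ => ?_)
    ((summable_pow_mul_exp_neg (A := 2 * n + 1) (by positivity) (mul_pos four_pos ht)
      (2 * n + 1)).mul_left (c * exp t))
  let s : ℝ := 2 * n + 1 + (m + 2 * k)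
  have hzonal : |zonalCoeff (2 * n - 1) x m k| ≤ s ^ (2 * n + k) := by
    convert abs_zonalCoeff_le (2 * n - 1) hx m k using 2
    · simp only [s]
      linear_combination -hcast
    · omega
  have hexponent : -(4 * (k * (k + 2 * n + m + 1) + n * m)) * t ≤
      -(4 * t * (k * (k + m) + m)) := by
    have : 0 ≤ 4 * t * (k * (2 * n + 1) + (n - 1) * m) := by
      have := sub_nonneg.mpr hn'
      positivity
    linarith
  calc |heatCoeff n t x (m, k)| * exp (t * (m + 1 : ℝ) ^ 2)
      = c * s * |zonalCoeff (2 * n - 1) x m k| *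
          (exp (-((m + 2 * k) * (m + 2 * k + 4 * n + 2)) * t) * exp (t * (m + 1) ^ 2)) := by
        rw [heatCoeff, abs_mul, abs_of_nonneg (by positivity)]
        simp only [c, s]
        ring
    _ = c * s * |zonalCoeff (2 * n - 1) x m k| *
          (exp t * exp (-(4 * (k * (k + 2 * n + m + 1) + n * m)) * t)) := by
        rw [exp_riemannian_eigenvalue_mul_exp]
    _ ≤ c * s * s ^ (2 * n + k) * (exp t * exp (-(4 * t * (k * (k + m) + m)))) := by gcongr
    _ = c * exp t * (s ^ (2 * n + 1 + k) * exp (-(4 * t * (k * (k + m) + m)))) := by ring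

theorem sinh_mul_qKernel {n : ℕ} (hn : 1 ≤ n) {C : ℕ → ℝ → ℝ} (hC : IsGegenbauer n C) {t x : ℝ}
    (ht : 0 < t) (hx : |x| ≤ 1) (y : ℝ) :
    sinh y * qKernel n C t (x * cosh y) =
      ∑' q : ℕ × ℕ, heatCoeff n t x q * sinh ((q.1 + 1) * y) := by
  have hGamma : Gamma (2 * n + 1) = 2 * n * Gamma (2 * n) := Gamma_add_one (by positivity)
  have hzonal (l : ℕ) : 2 * n * (sinh y * C l (x * cosh y)) =
      ∑ q ∈ degreePairs l, zonalCoeff (2 * n - 1) x q.1 q.2 * sinh ((q.1 + 1) * y) := by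
    obtain ⟨α, hα⟩ : ∃ α, 2 * n = α + 1 := ⟨2 * n - 1, by omega⟩
    have hα' : (2 * n : ℝ) = α + 1 := mod_cast hα
    rw [hC.eq_eval, hα', hα]
    exact sinh_mul_eval_gegenbauerPoly α l x y
  rw [tsum_eq_tsum_sum_degreePairs
    (summable_mul_sinh ht (summable_abs_heatCoeff_mul_exp hn ht hx) y), qKernel,
    ← tsum_mul_left, ← tsum_mul_left, hGamma]
  refine tsum_congr fun l => ?_
  calc sinh y * (2 * n * Gamma (2 * n) / (2 * π ^ (2 * n + 2)) *
        ((l + 2 * n + 1) * exp (-(l * (l + 4 * n + 2)) * t) * C l (x * cosh y)))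
      = Gamma (2 * n) / (2 * π ^ (2 * n + 2)) * (l + 2 * n + 1) *
          exp (-(l * (l + 4 * n + 2)) * t) * (2 * n * (sinh y * C l (x * cosh y))) := by ring
    _ = ∑ q ∈ degreePairs l, heatCoeff n t x q * sinh ((q.1 + 1) * y) := by
        rw [hzonal, Finset.mul_sum]
        refine Finset.sum_congr rfl fun ⟨m, k⟩ hq => ?_
        obtain rfl := mem_degreePairs.mp hq
        rw [heatCoeff]
        push_cast
        ring

theorem pTerm_eq_heatCoeff_mul {n : ℕ} (hn : 1 ≤ n) {J : ℕ → ℕ → ℕ → ℝ → ℝ} (hJ : IsJacobi J)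
    (t r : ℝ) {η : ℝ} (hη : sin η ≠ 0) (q : ℕ × ℕ) :
    pTerm n J t r η q = exp (-t) / sin η *
      (heatCoeff n t (cos r) q * (exp (t * (q.1 + 1 : ℝ) ^ 2) * sin ((q.1 + 1) * η))) := by
  have hη₀ : η ≠ 0 := fun h => hη (by rw [h, sin_zero])
  have hexp : exp (-(4 * (q.2 * (q.2 + 2 * n + q.1 + 1) + n * q.1)) * t) =
      exp (-t) * (exp (-((q.1 + 2 * q.2) * (q.1 + 2 * q.2 + 4 * n + 2)) * t) *
        exp (t * (q.1 + 1 : ℝ) ^ 2)) := by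
    rw [exp_riemannian_eigenvalue_mul_exp, ← mul_assoc, ← exp_add, neg_add_cancel, exp_zero,
      one_mul]
  rw [pTerm, vertFactor, if_neg hη₀, hJ.eq_eval, cos_two_mul, hexp, heatCoeff, zonalCoeff,
    show q.2 + q.1 + (2 * n - 1) + 1 = q.2 + q.1 + 2 * n by omega]
  ring

theorem stmt_7_general (n : ℕ) (hn : 1 ≤ n) (J : ℕ → ℕ → ℕ → ℝ → ℝ) (hJ : IsJacobi J)
    (C : ℕ → ℝ → ℝ) (hC : IsGegenbauer n C) (t r η : ℝ) (ht : 0 < t) (hη : sin η ≠ 0) :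
    pKernel n J t r η =
      (exp (-t) / √(π * t)) *
        ∫ y in Ioi (0 : ℝ), (sinh y * sin (η * y / (2 * t)) / sin η) *
          exp (-(y ^ 2 - η ^ 2) / (4 * t)) * qKernel n C t (cos r * cosh y) := by
  have hintegrand (y : ℝ) : (sinh y * sin (η * y / (2 * t)) / sin η) *
      exp (-(y ^ 2 - η ^ 2) / (4 * t)) * qKernel n C t (cos r * cosh y) =
      1 / sin η * ((∑' q : ℕ × ℕ, heatCoeff n t (cos r) q * sinh ((q.1 + 1) * y)) *
        (sin (η * y / (2 * t)) * exp (-(y ^ 2 - η ^ 2) / (4 * t)))) := by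
    rw [← sinh_mul_qKernel hn hC ht (abs_cos_le_one r)]
    ring
  have hsqrt : √(π * t) ≠ 0 := by positivity
  simp only [hintegrand, pKernel, pTerm_eq_heatCoeff_mul hn hJ t r hη, tsum_mul_left]
  rw [integral_const_mul, integral_Ioi_tsum_mul_sinh_mul_sin_div ht
    (summable_abs_heatCoeff_mul_exp hn ht (abs_cos_le_one r)), mul_left_comm (1 / sin η),
    ← mul_assoc (_ / _), div_mul_cancel₀ _ hsqrt, ← mul_assoc, mul_one_div]

end Kernel

/-- integral representation of the subelliptic heat kernel of the quaternionic
Hopf fibration in terms of the Riemannian heat kernel of `S^{4n+3}`. -/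
theorem stmt_7 (n : ℕ) (hn : 1 ≤ n) (J : ℕ → ℕ → ℕ → ℝ → ℝ) (hJ : IsJacobi J)
    (C : ℕ → ℝ → ℝ) (hC : IsGegenbauer n C)
    (t r η : ℝ) (ht : 0 < t) (hr : r ∈ Set.Ico 0 (π / 2)) (hη : η ∈ Set.Ioo 0 π) :
    pKernel n J t r η =
      (Real.exp (-t) / Real.sqrt (π * t)) *
        ∫ y in Set.Ioi (0 : ℝ),
          (Real.sinh y * Real.sin (η * y / (2 * t)) / Real.sin η) *
            Real.exp (-(y ^ 2 - η ^ 2) / (4 * t)) * qKernel n C t (Real.cos r * Real.cosh y) :=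
  stmt_7_general n hn J hJ C hC t r η ht (sin_pos_of_pos_of_lt_pi hη.1 hη.2).ne'
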